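/- Fix D ∈ ℍ^{m×n}, Ω ⊆ Fin m × Fin n, and λ > 0. Let Z^k = (A^k, B^k, X^k) satisfy the LRQD recurrences (X^k_{ij} = D_{ij} on Ω and = (A^k·B^k)_{ij} off Ω; A^{k+1} = (X^k·(B^k)ᴴ + λ·A^k)·(B^k·(B^k)ᴴ + λ·I)⁻¹; B^{k+1} = ((A^{k+1})ᴴ·A^{k+1} + λ·I)⁻¹·((A^{k+1})ᴴ·X^k + λ·B^k)), let f(A,B,X) = ½‖A·B − X‖_F². Assume {Z^k} is bounded and converges to Z#, and that the Kurdyka–Łojasiewicz inequality holds along the sequence with an exponent θ satisfying 1/2 < θ < 1: there exists μ > 0 such that |f(Z^k) − f(Z#)|^θ ≤ μ·G(Z^k) for all k. Then there exists β > 0 such that ‖Z^k − Z#‖ ≤ β·k^{−(1−θ)/(2θ−1)} for all k ≥ 1. -/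

import Mathlib

open scoped Quaternion Matrix
open Filter

/-- The Frobenius norm of a quaternion matrix. -/
noncomputable def frob {m n : ℕ} (A : Matrix (Fin m) (Fin n) ℍ[ℝ]) : ℝ :=
  Real.sqrt (∑ i, ∑ j, ‖A i j‖ ^ 2)

/-- The norm of a triple (A, B, X). -/
noncomputable def tnorm {m r n : ℕ} (A : Matrix (Fin m) (Fin r) ℍ[ℝ])
    (B : Matrix (Fin r) (Fin n) ℍ[ℝ]) (X : Matrix (Fin m) (Fin n) ℍ[ℝ]) : ℝ :=
  Real.sqrt (frob A ^ 2 + frob B ^ 2 + frob X ^ 2)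

/-- The projected-gradient norm G(A,B,X). -/
noncomputable def pgnorm {m r n : ℕ} (Ω : Set (Fin m × Fin n)) [DecidablePred (· ∈ Ω)]
    (A : Matrix (Fin m) (Fin r) ℍ[ℝ]) (B : Matrix (Fin r) (Fin n) ℍ[ℝ])
    (X : Matrix (Fin m) (Fin n) ℍ[ℝ]) : ℝ :=
  Real.sqrt (frob ((A * B - X) * Bᴴ) ^ 2 + frob (Aᴴ * (A * B - X)) ^ 2 +
    ∑ p : Fin m × Fin n, if p ∈ Ω then 0 else ‖(X - A * B) p.1 p.2‖ ^ 2)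

lemma frob_nonneg {m n : ℕ} (A : Matrix (Fin m) (Fin n) ℍ[ℝ]) : 0 ≤ frob A := Real.sqrt_nonneg _

lemma frob_sq {m n : ℕ} (A : Matrix (Fin m) (Fin n) ℍ[ℝ]) :
    frob A ^ 2 = ∑ i, ∑ j, ‖A i j‖ ^ 2 :=
  Real.sq_sqrt (Finset.sum_nonneg fun _ _ => Finset.sum_nonneg fun _ _ => sq_nonneg _)

lemma frob_mono {m n : ℕ} (A B : Matrix (Fin m) (Fin n) ℍ[ℝ])
    (h : ∀ i j, ‖A i j‖ ≤ ‖B i j‖) : frob A ≤ frob B := by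
  unfold frob
  gcongr with i _ j _
  exact h i j

lemma frob_neg {m n : ℕ} (A : Matrix (Fin m) (Fin n) ℍ[ℝ]) : frob (-A) = frob A := by
  simp [frob]

lemma frob_conj {m n : ℕ} (A : Matrix (Fin m) (Fin n) ℍ[ℝ]) : frob Aᴴ = frob A := by
  simp only [frob, Matrix.conjTranspose_apply, norm_star]
  rw [Finset.sum_comm]

lemma frob_smul {m n : ℕ} (c : ℝ) (hc : 0 ≤ c) (A : Matrix (Fin m) (Fin n) ℍ[ℝ]) :
    frob (c • A) = c * frob A := by
  simp only [frob, Matrix.smul_apply, norm_smul, mul_pow, ← Finset.mul_sum]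
  rw [Real.sqrt_mul (by positivity), Real.sqrt_sq (norm_nonneg c), Real.norm_of_nonneg hc]

lemma frob_entry {m n : ℕ} (A : Matrix (Fin m) (Fin n) ℍ[ℝ]) (i j) : ‖A i j‖ ≤ frob A := by
  refine Real.le_sqrt_of_sq_le ?_
  calc ‖A i j‖ ^ 2 ≤ ∑ j, ‖A i j‖ ^ 2 :=
        Finset.single_le_sum (f := fun j => ‖A i j‖ ^ 2) (fun _ _ => sq_nonneg _) (Finset.mem_univ j)
    _ ≤ _ := Finset.single_le_sum (f := fun i => ∑ j, ‖A i j‖ ^ 2)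
        (fun _ _ => Finset.sum_nonneg fun _ _ => sq_nonneg _) (Finset.mem_univ i)

section
attribute [local instance] Matrix.frobeniusNormedAddCommGroup
lemma frob_add {m n : ℕ} (A B : Matrix (Fin m) (Fin n) ℍ[ℝ]) :
    frob (A + B) ≤ frob A + frob B := by
  have h : ∀ C : Matrix (Fin m) (Fin n) ℍ[ℝ], frob C = ‖C‖ := by
    intro C
    rw [Matrix.frobenius_norm_def, frob, Real.sqrt_eq_rpow]
    simp
  rw [h, h, h]
  exact norm_add_le A B
end

lemma frob_sub {m n : ℕ} (A B : Matrix (Fin m) (Fin n) ℍ[ℝ]) :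
    frob (A - B) ≤ frob A + frob B := by
  rw [sub_eq_add_neg, ← frob_neg B]; exact frob_add _ _

lemma frob_mul {m n r : ℕ} (A : Matrix (Fin m) (Fin r) ℍ[ℝ]) (B : Matrix (Fin r) (Fin n) ℍ[ℝ]) :
    frob (A * B) ≤ frob A * frob B := by
  refine Real.sqrt_le_iff.2 ⟨mul_nonneg (frob_nonneg _) (frob_nonneg _), ?_⟩
  rw [mul_pow, frob_sq, frob_sq, Finset.sum_mul]
  refine Finset.sum_le_sum fun i _ => ?_
  rw [Finset.sum_comm (f := fun k j => ‖B k j‖ ^ 2), Finset.mul_sum]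
  refine Finset.sum_le_sum fun j _ => ?_
  refine le_trans ?_ (Finset.sum_mul_sq_le_sq_mul_sq _ _ _)
  gcongr
  rw [Matrix.mul_apply]
  refine (norm_sum_le _ _).trans (le_of_eq ?_)
  simp

/-- real inner product -/
noncomputable def ipq {m n : ℕ} (A B : Matrix (Fin m) (Fin n) ℍ[ℝ]) : ℝ :=
  ∑ i, ∑ j, (A i j * star (B i j)).re

lemma ipq_self {m n : ℕ} (A : Matrix (Fin m) (Fin n) ℍ[ℝ]) : ipq A A = frob A ^ 2 := by
  rw [frob_sq]
  refine Finset.sum_congr rfl fun i _ => Finset.sum_congr rfl fun j _ => ?_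
  rw [Quaternion.self_mul_star, Quaternion.re_coe, Quaternion.normSq_eq_norm_mul_self, sq]

lemma ipq_add_left {m n : ℕ} (A B C : Matrix (Fin m) (Fin n) ℍ[ℝ]) :
    ipq (A + B) C = ipq A C + ipq B C := by
  simp [ipq, add_mul, Finset.sum_add_distrib]

lemma ipq_smul_left {m n : ℕ} (c : ℝ) (A C : Matrix (Fin m) (Fin n) ℍ[ℝ]) :
    ipq (c • A) C = c * ipq A C := by
  simp only [ipq, Finset.mul_sum, Matrix.smul_apply, smul_mul_assoc, Quaternion.re_smul, smul_eq_mul]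

lemma re_comm (a b : ℍ[ℝ]) : (a * b).re = (b * a).re := by
  simp [Quaternion.re_mul]; ring

lemma ipq_comm {m n : ℕ} (A B : Matrix (Fin m) (Fin n) ℍ[ℝ]) : ipq A B = ipq B A := by
  refine Finset.sum_congr rfl fun i _ => Finset.sum_congr rfl fun j _ => ?_
  simp [Quaternion.re_mul]; ring

lemma re_sum {ι : Type*} (s : Finset ι) (f : ι → ℍ[ℝ]) : (∑ i ∈ s, f i).re = ∑ i ∈ s, (f i).re := by
  classical
  induction s using Finset.induction_on with
  | empty => simp
  | insert a s ha ih => simp [Finset.sum_insert ha, ih]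

lemma ipq_right {m n r : ℕ} (R : Matrix (Fin m) (Fin n) ℍ[ℝ]) (C : Matrix (Fin m) (Fin r) ℍ[ℝ])
    (B : Matrix (Fin r) (Fin n) ℍ[ℝ]) : ipq R (C * B) = ipq (R * Bᴴ) C := by
  simp only [ipq, Matrix.mul_apply, star_sum, Finset.mul_sum, Finset.sum_mul, re_sum, star_mul,
    Matrix.conjTranspose_apply, mul_assoc]
  refine Finset.sum_congr rfl fun i _ => ?_
  rw [Finset.sum_comm]

lemma ipq_left {m n r : ℕ} (R : Matrix (Fin m) (Fin n) ℍ[ℝ]) (C : Matrix (Fin m) (Fin r) ℍ[ℝ])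
    (B : Matrix (Fin r) (Fin n) ℍ[ℝ]) : ipq R (C * B) = ipq (Cᴴ * R) B := by
  simp only [ipq, Matrix.mul_apply, star_sum, Finset.mul_sum, Finset.sum_mul, re_sum, star_mul,
    Matrix.conjTranspose_apply]
  rw [Finset.sum_comm]
  have : ∀ j : Fin n, (∑ i : Fin m, ∑ k : Fin r, (R i j * (star (B k j) * star (C i k))).re)
      = ∑ k : Fin r, ∑ i : Fin m, (star (C i k) * R i j * star (B k j)).re := by
    intro j
    rw [Finset.sum_comm]
    refine Finset.sum_congr rfl fun k _ => Finset.sum_congr rfl fun i _ => ?_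
    rw [← mul_assoc, re_comm, mul_assoc]
  simp_rw [this]
  rw [Finset.sum_comm]

lemma frob_add_sq {m n : ℕ} (A B : Matrix (Fin m) (Fin n) ℍ[ℝ]) :
    frob (A + B) ^ 2 = frob A ^ 2 + 2 * ipq A B + frob B ^ 2 := by
  rw [← ipq_self, ← ipq_self, ← ipq_self, ipq_add_left, ipq_comm A (A+B), ipq_comm B (A+B),
    ipq_add_left, ipq_add_left, ipq_comm B A]; ring

lemma frob_eq_zero {m n : ℕ} (A : Matrix (Fin m) (Fin n) ℍ[ℝ]) (h : frob A = 0) : A = 0 := by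
  ext1 i j
  have := frob_entry A i j
  rw [h] at this
  simpa using this

lemma unit_aux {r n : ℕ} (B : Matrix (Fin r) (Fin n) ℍ[ℝ]) (lam : ℝ) (hlam : 0 < lam) :
    IsUnit (B * Bᴴ + lam • (1 : Matrix (Fin r) (Fin r) ℍ[ℝ])) := by
  set P := B * Bᴴ + lam • (1 : Matrix (Fin r) (Fin r) ℍ[ℝ]) with hP
  have hPH : Pᴴ = P := by
    have h1 : (lam • (1 : Matrix (Fin r) (Fin r) ℍ[ℝ]))ᴴ = lam • 1 := by
      ext1 i j
      by_cases h : i = j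
      · subst h; simp
      · simp [h, Ne.symm h]
    rw [hP, Matrix.conjTranspose_add, h1, Matrix.conjTranspose_mul,
      Matrix.conjTranspose_conjTranspose]
  have hinj : Function.Injective (LinearMap.mulLeft ℝ P) := by
    rw [injective_iff_map_eq_zero]
    intro C hC
    rw [LinearMap.mulLeft_apply] at hC
    have h1 : ipq (P * C) C = frob (Bᴴ * C) ^ 2 + lam * frob C ^ 2 := by
      rw [hP, add_mul, ipq_add_left, smul_mul_assoc, one_mul, ipq_smul_left, ipq_self,
        ← ipq_self (Bᴴ * C), ipq_left, Matrix.conjTranspose_conjTranspose, Matrix.mul_assoc]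
    rw [hC] at h1
    have h2 : ipq (0 : Matrix (Fin r) (Fin r) ℍ[ℝ]) C = 0 := by simp [ipq]
    rw [h2] at h1
    have h3 : frob C ^ 2 = 0 := by
      nlinarith [sq_nonneg (frob (Bᴴ * C)), sq_nonneg (frob C)]
    exact frob_eq_zero _ (by simpa using h3)
  have hsurj := LinearMap.surjective_of_injective hinj
  obtain ⟨Q, hQ⟩ := hsurj 1
  rw [LinearMap.mulLeft_apply] at hQ
  have hQ2 : Qᴴ * P = 1 := by
    have := congrArg Matrix.conjTranspose hQ
    rwa [Matrix.conjTranspose_mul, hPH, Matrix.conjTranspose_one] at this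
  have : Qᴴ = Q := left_inv_eq_right_inv hQ2 hQ
  exact ⟨⟨P, Q, hQ, this ▸ hQ2⟩, rfl⟩

lemma seq_rate (s d T : ℕ → ℝ) (θ c C K : ℝ) (hθ : 1 / 2 < θ ∧ θ < 1) (hc : 0 < c) (hC : 0 < C)
    (hK : 0 < K) (hs : ∀ k, 0 ≤ s k) (hd : ∀ k, 0 ≤ d k)
    (h1 : ∀ k, s (k + 1) + c * d k ^ 2 ≤ s k) (h2 : ∀ k, s k ^ θ ≤ C * d k)
    (h3 : ∀ k, T k ≤ T (k + 1) + K * d k) (hT : Tendsto T atTop (nhds 0)) :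
    ∃ β : ℝ, 0 < β ∧ ∀ k : ℕ, 1 ≤ k → T k ≤ β * (k : ℝ) ^ (-(1 - θ) / (2 * θ - 1)) := by
  obtain ⟨hθ1, hθ2⟩ := hθ
  set p := 2 * θ - 1 with hp
  have hp0 : 0 < p := by linarith
  have hp1 : p < 1 := by linarith
  -- length estimate
  set L := K * C / (c * (1 - θ)) with hL
  have hL0 : 0 < L := by have : 0 < 1 - θ := by linarith
                         positivity
  have key : ∀ k, K * d k ≤ L * (s k ^ (1 - θ) - s (k + 1) ^ (1 - θ)) := by
    intro k
    rcases (hs k).eq_or_lt with h0 | h0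
    · have e1 : s (k + 1) = 0 := by nlinarith [h1 k, hs (k + 1), sq_nonneg (d k)]
      have e2 : d k = 0 := by
        have := h1 k
        rw [e1, ← h0] at this
        have : d k ^ 2 = 0 := by nlinarith [sq_nonneg (d k)]
        simpa using this
      rw [e1, e2, ← h0]; simp
    · have hB : (s (k + 1) / s k) ^ (1 - θ) ≤ 1 + (1 - θ) * (s (k + 1) / s k - 1) := by
        have := rpow_one_add_le_one_add_mul_self (s := s (k + 1) / s k - 1)
          (by have := div_nonneg (hs (k+1)) h0.le; linarith) (p := 1 - θ) (by linarith) (by linarith)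
        simpa using this
      rw [Real.div_rpow (hs _) h0.le] at hB
      have hq : 0 < s k ^ (1 - θ) := Real.rpow_pos_of_pos h0 _
      have hq2 : 0 < s k ^ θ := Real.rpow_pos_of_pos h0 _
      have hmul : s k ^ (1 - θ) * s k ^ θ = s k := by
        rw [← Real.rpow_add h0]; simp
      have hdpos : 0 < d k := by
        by_contra h
        have : d k = 0 := le_antisymm (not_lt.1 h) (hd k)
        have h2k := h2 k
        rw [this] at h2k; linarith
      -- (1-θ)(s k - s(k+1)) ≤ s k^θ (diff)
      have e : (1 - θ) * (s k - s (k + 1)) ≤ s k ^ θ * (s k ^ (1 - θ) - s (k + 1) ^ (1 - θ)) := by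
        have h5 : s (k + 1) ^ (1 - θ) ≤ s k ^ (1 - θ) * (1 + (1 - θ) * (s (k + 1) / s k - 1)) := by
          rw [div_le_iff₀ hq] at hB; linarith
        have h6 := mul_le_mul_of_nonneg_left h5 hq2.le
        have h7 : s k ^ θ * (s k ^ (1 - θ) * (1 + (1 - θ) * (s (k + 1) / s k - 1)))
            = s k + (1 - θ) * (s (k + 1) - s k) := by
          rw [← mul_assoc, mul_comm (s k ^ θ), hmul]; field_simp
        rw [h7] at h6
        have h8 : s k ^ θ * s k ^ (1 - θ) = s k := by rw [mul_comm]; exact hmul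
        rw [mul_sub (s k ^ θ), h8]; linarith
      have hD : 0 ≤ s k ^ (1 - θ) - s (k + 1) ^ (1 - θ) := by
        have : s (k + 1) ^ (1 - θ) ≤ s k ^ (1 - θ) :=
          Real.rpow_le_rpow (hs _) (by nlinarith [h1 k, sq_nonneg (d k)]) (by linarith)
        linarith
      have e3 : (1 - θ) * (c * d k ^ 2) ≤ C * d k * (s k ^ (1 - θ) - s (k + 1) ^ (1 - θ)) := by
        calc (1 - θ) * (c * d k ^ 2) ≤ (1 - θ) * (s k - s (k + 1)) := by
              apply mul_le_mul_of_nonneg_left _ (by linarith); linarith [h1 k]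
          _ ≤ _ := e
          _ ≤ _ := mul_le_mul_of_nonneg_right (h2 k) hD
      have e4 : (1 - θ) * c * d k ≤ C * (s k ^ (1 - θ) - s (k + 1) ^ (1 - θ)) := by
        refine le_of_mul_le_mul_right ?_ hdpos
        linarith
      have h9 : 0 < c * (1 - θ) := mul_pos hc (by linarith)
      rw [hL, div_mul_eq_mul_div, le_div_iff₀ h9]
      have := mul_le_mul_of_nonneg_left e4 hK.le
      linarith
  have hTL : ∀ k, T k ≤ L * s k ^ (1 - θ) := by
    have hmono : Monotone fun k => T k - L * s k ^ (1 - θ) := by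
      refine monotone_nat_of_le_succ fun k => ?_
      have := key k; have := h3 k
      linarith
    intro k
    have : T k - L * s k ^ (1 - θ) ≤ 0 := by
      refine ge_of_tendsto hT ?_
      filter_upwards [eventually_ge_atTop k] with j hj
      have h := hmono hj
      have : 0 ≤ L * s j ^ (1 - θ) := mul_nonneg hL0.le (Real.rpow_nonneg (hs j) _)
      simp only at h
      linarith
    linarith
  -- decay of s
  set q := p * (c / C ^ 2) with hq
  have hq0 : 0 < q := by positivity
  have hdec : ∀ k, s (k + 1) ≤ s k - c / C ^ 2 * (s k * s k ^ p) := by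
    intro k
    have h4 : s k * s k ^ p = (s k ^ θ) ^ 2 := by
      rw [← Real.rpow_natCast (s k ^ θ), ← Real.rpow_mul (hs k)]
      rcases (hs k).eq_or_lt with h0 | h0
      · rw [← h0, zero_mul, Real.zero_rpow]; push_cast; linarith
      · conv_lhs => rw [← Real.rpow_one (s k), ← Real.rpow_mul h0.le, one_mul, ← Real.rpow_add h0]
        congr 1; rw [hp]; push_cast; ring
    have h5 : (s k ^ θ) ^ 2 ≤ (C * d k) ^ 2 := by
      gcongr
      · exact Real.rpow_nonneg (hs k) _
      · exact h2 k
    rw [h4]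
    have : c / C ^ 2 * (s k ^ θ) ^ 2 ≤ c * d k ^ 2 := by
      rw [div_mul_eq_mul_div, div_le_iff₀ (by positivity)]
      nlinarith
    linarith [h1 k]
  have hgrow : ∀ k : ℕ, q * k * s k ^ p ≤ 1 := by
    intro k
    induction k with
    | zero => simp
    | succ k ih =>
      rcases (hs (k + 1)).eq_or_lt with h0 | h0
      · rw [← h0, Real.zero_rpow hp0.ne']; simp
      · have hk0 : 0 < s k := by nlinarith [h1 k, sq_nonneg (d k)]
        set x := c / C ^ 2 * s k ^ p with hx
        have hw : 0 < s k ^ p := Real.rpow_pos_of_pos hk0 _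
        have hx0 : 0 < x := by positivity
        have hle : s (k + 1) ≤ s k * (1 - x) := by have := hdec k; rw [hx]; linarith
        have hx1 : 0 < 1 - x := by
          by_contra h
          nlinarith
        have hb : (1 - x) ^ p ≤ 1 - p * x := by
          have := rpow_one_add_le_one_add_mul_self (s := -x) (by linarith) hp0.le hp1.le
          simpa [sub_eq_add_neg] using this
        have h6 : s (k + 1) ^ p ≤ s k ^ p * (1 - p * x) := by
          calc s (k + 1) ^ p ≤ (s k * (1 - x)) ^ p := Real.rpow_le_rpow h0.le hle hp0.le
            _ = s k ^ p * (1 - x) ^ p := Real.mul_rpow hk0.le hx1.le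
            _ ≤ _ := by gcongr
        have hpx : p * x = q * s k ^ p := by rw [hx, hq]; ring
        rw [hpx] at h6
        have : q * ((k + 1 : ℕ) : ℝ) * s (k + 1) ^ p
            ≤ q * ((k + 1 : ℕ) : ℝ) * (s k ^ p * (1 - q * s k ^ p)) := by gcongr
        refine this.trans ?_
        push_cast
        set w := s k ^ p
        have hpos : 0 ≤ 1 - q * w := by
          have : 0 < s (k+1) ^ p := Real.rpow_pos_of_pos h0 _
          by_contra h
          nlinarith
        have : q * (k + 1) * w ≤ 1 + q * w := by linarith
        calc q * (k + 1) * (w * (1 - q * w)) = (q * (k + 1) * w) * (1 - q * w) := by ring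
          _ ≤ (1 + q * w) * (1 - q * w) := by gcongr
          _ ≤ 1 := by nlinarith [sq_nonneg (q * w)]
  refine ⟨L * q ^ (-(1 - θ) / p), by positivity, fun k hk => ?_⟩
  have hk0 : (0 : ℝ) < k := by exact_mod_cast hk
  refine (hTL k).trans ?_
  rw [mul_assoc, ← Real.mul_rpow hq0.le hk0.le]
  refine mul_le_mul_of_nonneg_left ?_ hL0.le
  have hqk : 0 < q * k := by positivity
  have h7 : s k ^ p ≤ (q * k)⁻¹ := by
    rw [← one_div, le_div_iff₀ hqk]; linarith [hgrow k]
  have h8 : s k ^ (1 - θ) = (s k ^ p) ^ ((1 - θ) / p) := by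
    rw [← Real.rpow_mul (hs k)]; congr 1; field_simp
  rw [h8, neg_div, Real.rpow_neg hqk.le, ← Real.inv_rpow hqk.le]
  exact Real.rpow_le_rpow (Real.rpow_nonneg (hs k) _) h7
    (div_nonneg (by linarith) hp0.le)

lemma stepA {m r n : ℕ} (lam : ℝ) (hlam : 0 < lam) (A A' : Matrix (Fin m) (Fin r) ℍ[ℝ])
    (B : Matrix (Fin r) (Fin n) ℍ[ℝ]) (X : Matrix (Fin m) (Fin n) ℍ[ℝ])
    (h : A' = (X * Bᴴ + lam • A) *
      Ring.inverse (B * Bᴴ + lam • (1 : Matrix (Fin r) (Fin r) ℍ[ℝ]))) :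
    (A' * B - X) * Bᴴ = lam • (A - A') := by
  have h1 : A' * (B * Bᴴ + lam • (1 : Matrix (Fin r) (Fin r) ℍ[ℝ])) = X * Bᴴ + lam • A := by
    rw [h, Matrix.mul_assoc, Ring.inverse_mul_cancel _ (unit_aux B lam hlam), Matrix.mul_one]
  rw [Matrix.mul_add, Matrix.mul_smul, Matrix.mul_one, ← Matrix.mul_assoc] at h1
  rw [Matrix.sub_mul, smul_sub, sub_eq_sub_iff_add_eq_add, h1, add_comm]

lemma stepB {m r n : ℕ} (lam : ℝ) (hlam : 0 < lam) (A : Matrix (Fin m) (Fin r) ℍ[ℝ])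
    (B B' : Matrix (Fin r) (Fin n) ℍ[ℝ]) (X : Matrix (Fin m) (Fin n) ℍ[ℝ])
    (h : B' = Ring.inverse (Aᴴ * A + lam • (1 : Matrix (Fin r) (Fin r) ℍ[ℝ])) *
      (Aᴴ * X + lam • B)) :
    Aᴴ * (A * B' - X) = lam • (B - B') := by
  have hu := unit_aux Aᴴ lam hlam
  rw [Matrix.conjTranspose_conjTranspose] at hu
  have h1 : (Aᴴ * A + lam • (1 : Matrix (Fin r) (Fin r) ℍ[ℝ])) * B' = Aᴴ * X + lam • B := by
    rw [h, ← Matrix.mul_assoc, Ring.mul_inverse_cancel _ hu, Matrix.one_mul]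
  rw [Matrix.add_mul, Matrix.smul_mul, Matrix.one_mul, Matrix.mul_assoc] at h1
  rw [Matrix.mul_sub, smul_sub, sub_eq_sub_iff_add_eq_add, h1, add_comm]

lemma descA {m r n : ℕ} (lam : ℝ) (A A' : Matrix (Fin m) (Fin r) ℍ[ℝ])
    (B : Matrix (Fin r) (Fin n) ℍ[ℝ]) (X : Matrix (Fin m) (Fin n) ℍ[ℝ])
    (h : (A' * B - X) * Bᴴ = lam • (A - A')) :
    frob (A' * B - X) ^ 2 + 2 * lam * frob (A' - A) ^ 2 ≤ frob (A * B - X) ^ 2 := by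
  have e : A * B - X = (A' * B - X) + (A - A') * B := by rw [Matrix.sub_mul]; abel
  rw [e, frob_add_sq, ipq_right, h, ipq_smul_left, ipq_self, ← frob_neg (A' - A), neg_sub]
  nlinarith [sq_nonneg (frob ((A - A') * B))]

lemma descB {m r n : ℕ} (lam : ℝ) (A : Matrix (Fin m) (Fin r) ℍ[ℝ])
    (B B' : Matrix (Fin r) (Fin n) ℍ[ℝ]) (X : Matrix (Fin m) (Fin n) ℍ[ℝ])
    (h : Aᴴ * (A * B' - X) = lam • (B - B')) :
    frob (A * B' - X) ^ 2 + 2 * lam * frob (B' - B) ^ 2 ≤ frob (A * B - X) ^ 2 := by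
  have e : A * B - X = (A * B' - X) + A * (B - B') := by rw [Matrix.mul_sub]; abel
  rw [e, frob_add_sq, ipq_left, h, ipq_smul_left, ipq_self, ← frob_neg (B' - B), neg_sub]
  nlinarith [sq_nonneg (frob (A * (B - B')))]

lemma gradA {m r n : ℕ} (lam M : ℝ) (hlam : 0 < lam) (A A' : Matrix (Fin m) (Fin r) ℍ[ℝ])
    (B : Matrix (Fin r) (Fin n) ℍ[ℝ]) (X : Matrix (Fin m) (Fin n) ℍ[ℝ])
    (hB : frob B ≤ M) (h : (A' * B - X) * Bᴴ = lam • (A - A')) :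
    frob ((A * B - X) * Bᴴ) ≤ (lam + M * M) * frob (A' - A) := by
  have e : (A * B - X) * Bᴴ = lam • (A - A') + (A - A') * (B * Bᴴ) := by
    rw [← h, ← Matrix.mul_assoc, ← Matrix.add_mul, Matrix.sub_mul A A' B]; congr 1; abel
  have hM : 0 ≤ M := (frob_nonneg B).trans hB
  have hn : frob (A - A') = frob (A' - A) := by rw [← frob_neg, neg_sub]
  rw [e]
  refine (frob_add _ _).trans ?_
  rw [frob_smul _ hlam.le, hn]
  have h1 := frob_mul (A - A') (B * Bᴴ)
  have h2 : frob (B * Bᴴ) ≤ M * M := by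
    refine (frob_mul _ _).trans ?_
    rw [frob_conj]
    exact mul_le_mul hB hB (frob_nonneg _) hM
  rw [hn] at h1
  nlinarith [frob_nonneg (A' - A)]

lemma gradB {m r n : ℕ} (lam M : ℝ) (hlam : 0 < lam) (A A' : Matrix (Fin m) (Fin r) ℍ[ℝ])
    (B B' : Matrix (Fin r) (Fin n) ℍ[ℝ]) (X : Matrix (Fin m) (Fin n) ℍ[ℝ])
    (hA : frob A ≤ M) (hA' : frob A' ≤ M) (hB : frob B ≤ M) (hX : frob X ≤ M)
    (h : A'ᴴ * (A' * B' - X) = lam • (B - B')) :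
    frob (Aᴴ * (A * B - X)) ≤
      (lam + M * M) * frob (B' - B) + (M * M + M + M * M) * frob (A' - A) := by
  have e : Aᴴ * (A * B - X) = (lam • (B - B') + A'ᴴ * A' * (B - B'))
      + ((A - A')ᴴ * (A' * B - X) + Aᴴ * ((A - A') * B)) := by
    rw [← h]
    simp only [Matrix.conjTranspose_sub, Matrix.mul_sub, Matrix.sub_mul, Matrix.mul_assoc]
    abel
  have hM : 0 ≤ M := (frob_nonneg B).trans hB
  have hn : frob (A - A') = frob (A' - A) := by rw [← frob_neg, neg_sub]
  have hnB : frob (B - B') = frob (B' - B) := by rw [← frob_neg, neg_sub]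
  have h0 := frob_nonneg (A' - A)
  have h0B := frob_nonneg (B' - B)
  have b1 : frob (A'ᴴ * A' * (B - B')) ≤ M * M * frob (B' - B) := by
    refine (frob_mul _ _).trans ?_
    rw [hnB]
    refine mul_le_mul_of_nonneg_right ((frob_mul _ _).trans ?_) h0B
    rw [frob_conj]
    exact mul_le_mul hA' hA' (frob_nonneg _) hM
  have b2 : frob ((A - A')ᴴ * (A' * B - X)) ≤ (M * M + M) * frob (A' - A) := by
    refine (frob_mul _ _).trans ?_
    rw [frob_conj, hn, mul_comm]
    refine mul_le_mul_of_nonneg_right ((frob_sub _ _).trans ?_) h0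
    exact add_le_add ((frob_mul _ _).trans (mul_le_mul hA' hB (frob_nonneg _) hM)) hX
  have b3 : frob (Aᴴ * ((A - A') * B)) ≤ M * M * frob (A' - A) := by
    refine (frob_mul _ _).trans ?_
    rw [frob_conj, mul_assoc]
    refine mul_le_mul hA ((frob_mul _ _).trans ?_) (frob_nonneg _) hM
    rw [hn, mul_comm]
    exact mul_le_mul_of_nonneg_right hB h0
  rw [e]
  have t1 := frob_add (lam • (B - B') + A'ᴴ * A' * (B - B'))
    ((A - A')ᴴ * (A' * B - X) + Aᴴ * ((A - A') * B))
  have t2 := frob_add (lam • (B - B')) (A'ᴴ * A' * (B - B'))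
  have t3 := frob_add ((A - A')ᴴ * (A' * B - X)) (Aᴴ * ((A - A') * B))
  rw [frob_smul _ hlam.le, hnB] at t2
  linarith

lemma diffAB {m r n : ℕ} (M : ℝ) (A A' : Matrix (Fin m) (Fin r) ℍ[ℝ])
    (B B' : Matrix (Fin r) (Fin n) ℍ[ℝ]) (hA : frob A ≤ M) (hB' : frob B' ≤ M) :
    frob (A' * B' - A * B) ≤ M * (frob (A' - A) + frob (B' - B)) := by
  have e : A' * B' - A * B = (A' - A) * B' + A * (B' - B) := by
    rw [Matrix.sub_mul, Matrix.mul_sub]; abel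
  rw [e]
  have t := frob_add ((A' - A) * B') (A * (B' - B))
  have t1 := frob_mul (A' - A) B'
  have t2 := frob_mul A (B' - B)
  nlinarith [frob_nonneg (A' - A), frob_nonneg (B' - B)]

lemma tri {m n : ℕ} (U V W : Matrix (Fin m) (Fin n) ℍ[ℝ]) :
    frob (U - W) ≤ frob (V - W) + frob (V - U) := by
  have e : U - W = (V - W) - (V - U) := by abel
  rw [e]; exact frob_sub _ _

lemma tendsto_of_frob {m n : ℕ} (U : ℕ → Matrix (Fin m) (Fin n) ℍ[ℝ])
    (V : Matrix (Fin m) (Fin n) ℍ[ℝ])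
    (h : Tendsto (fun k => frob (U k - V)) atTop (nhds 0)) : Tendsto U atTop (nhds V) := by
  refine tendsto_pi_nhds.2 fun i => tendsto_pi_nhds.2 fun j => ?_
  rw [tendsto_iff_norm_sub_tendsto_zero]
  exact squeeze_zero (fun _ => norm_nonneg _) (fun k => frob_entry (U k - V) i j) h

lemma continuous_frob {m n : ℕ} :
    Continuous (frob : Matrix (Fin m) (Fin n) ℍ[ℝ] → ℝ) := by
  unfold frob
  refine Real.continuous_sqrt.comp ?_
  refine continuous_finsetSum _ fun i _ => continuous_finsetSum _ fun j _ => ?_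
  exact ((continuous_id.matrix_elem i j).norm).pow 2


/-- Sublinear convergence rate of the LRQD sequence under the KL inequality with
exponent θ ∈ (1/2, 1). -/
theorem LRQD_sublinear_rate {m r n : ℕ}
    (D : Matrix (Fin m) (Fin n) ℍ[ℝ]) (Ω : Set (Fin m × Fin n)) [DecidablePred (· ∈ Ω)]
    (lam : ℝ) (hlam : 0 < lam)
    (A : ℕ → Matrix (Fin m) (Fin r) ℍ[ℝ]) (B : ℕ → Matrix (Fin r) (Fin n) ℍ[ℝ])
    (X : ℕ → Matrix (Fin m) (Fin n) ℍ[ℝ])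
    (hXin : ∀ k, ∀ p ∈ Ω, X k p.1 p.2 = D p.1 p.2)
    (hXout : ∀ k, ∀ p : Fin m × Fin n, p ∉ Ω → X k p.1 p.2 = (A k * B k) p.1 p.2)
    (hA : ∀ k, A (k + 1) = (X k * (B k)ᴴ + lam • A k) *
      Ring.inverse (B k * (B k)ᴴ + lam • (1 : Matrix (Fin r) (Fin r) ℍ[ℝ])))
    (hB : ∀ k, B (k + 1) =
      Ring.inverse ((A (k + 1))ᴴ * A (k + 1) + lam • (1 : Matrix (Fin r) (Fin r) ℍ[ℝ])) *
      ((A (k + 1))ᴴ * X k + lam • B k))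
    (hbdd : ∃ M : ℝ, ∀ k, frob (A k) ≤ M ∧ frob (B k) ≤ M ∧ frob (X k) ≤ M)
    (Asharp : Matrix (Fin m) (Fin r) ℍ[ℝ]) (Bsharp : Matrix (Fin r) (Fin n) ℍ[ℝ])
    (Xsharp : Matrix (Fin m) (Fin n) ℍ[ℝ])
    (hconv : Tendsto (fun k => tnorm (A k - Asharp) (B k - Bsharp) (X k - Xsharp))
      atTop (nhds 0))
    (θ : ℝ) (hθ : 1 / 2 < θ ∧ θ < 1) (μ : ℝ) (hμ : 0 < μ)
    (hKL : ∀ k, |(1 / 2) * frob (A k * B k - X k) ^ 2 -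
        (1 / 2) * frob (Asharp * Bsharp - Xsharp) ^ 2| ^ θ ≤
      μ * pgnorm Ω (A k) (B k) (X k)) :
    ∃ β : ℝ, 0 < β ∧ ∀ k : ℕ, 1 ≤ k →
      tnorm (A k - Asharp) (B k - Bsharp) (X k - Xsharp) ≤
        β * (k : ℝ) ^ (-(1 - θ) / (2 * θ - 1)) := by
  obtain ⟨M, hM⟩ := hbdd
  have hM0 : 0 ≤ M := (frob_nonneg (A 0)).trans (hM 0).1
  have sA := fun k => stepA lam hlam _ _ _ _ (hA k)
  have sB := fun k => stepB lam hlam _ _ _ _ (hB k)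
  have ha0 := fun k => frob_nonneg (A (k + 1) - A k)
  have hb0 := fun k => frob_nonneg (B (k + 1) - B k)
  set t : ℕ → ℝ := fun k => tnorm (A k - Asharp) (B k - Bsharp) (X k - Xsharp) with ht
  have ltA : ∀ k, frob (A k - Asharp) ≤ t k := fun k => Real.le_sqrt_of_sq_le (by nlinarith)
  have ltB : ∀ k, frob (B k - Bsharp) ≤ t k := fun k => Real.le_sqrt_of_sq_le (by nlinarith)
  have ltX : ∀ k, frob (X k - Xsharp) ≤ t k := fun k => Real.le_sqrt_of_sq_le (by nlinarith)
  have cA := squeeze_zero (fun k => frob_nonneg (A k - Asharp)) ltA hconv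
  have cB := squeeze_zero (fun k => frob_nonneg (B k - Bsharp)) ltB hconv
  have cX := squeeze_zero (fun k => frob_nonneg (X k - Xsharp)) ltX hconv
  set T : ℕ → ℝ := fun k => frob (A k - Asharp) + frob (B k - Bsharp) + frob (X k - Xsharp) with hT
  have hT0 : Tendsto T atTop (nhds 0) := by simpa using (cA.add cB).add cX
  have htT : ∀ k, t k ≤ T k := fun k => by
    have h1 := frob_nonneg (A k - Asharp)
    have h2 := frob_nonneg (B k - Bsharp)
    have h3 := frob_nonneg (X k - Xsharp)
    refine Real.sqrt_le_iff.2 ⟨by positivity, ?_⟩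
    simp only [hT]
    nlinarith [mul_nonneg h1 h2, mul_nonneg h1 h3, mul_nonneg h2 h3]
  have dX : ∀ k, frob (X (k + 1) - X k) ≤
      M * (frob (A (k + 1) - A k) + frob (B (k + 1) - B k)) := by
    intro k
    refine le_trans (frob_mono _ _ fun i j => ?_)
      (diffAB M (A k) (A (k + 1)) (B k) (B (k + 1)) (hM k).1 (hM (k + 1)).2.1)
    by_cases h : (i, j) ∈ Ω
    · have e1 := hXin k (i, j) h
      have e2 := hXin (k + 1) (i, j) h
      simp only at e1 e2
      rw [Matrix.sub_apply, e1, e2]; simp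
    · have e1 := hXout k (i, j) h
      have e2 := hXout (k + 1) (i, j) h
      simp only at e1 e2
      rw [Matrix.sub_apply, e1, e2, Matrix.sub_apply]
  set F : ℕ → ℝ := fun k => (1 / 2) * frob (A k * B k - X k) ^ 2 with hF
  set Fs : ℝ := (1 / 2) * frob (Asharp * Bsharp - Xsharp) ^ 2 with hFs
  have hFlim : Tendsto F atTop (nhds Fs) := by
    have h1 : Tendsto (fun k => A k * B k - X k) atTop (nhds (Asharp * Bsharp - Xsharp)) := by
      have hc : Continuous fun p : Matrix (Fin m) (Fin r) ℍ[ℝ] × Matrix (Fin r) (Fin n) ℍ[ℝ] =>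
          p.1 * p.2 := continuous_fst.matrix_mul continuous_snd
      exact ((hc.tendsto (Asharp, Bsharp)).comp
        ((tendsto_of_frob A _ cA).prodMk_nhds (tendsto_of_frob B _ cB))).sub
        (tendsto_of_frob X _ cX)
    exact (((continuous_frob.tendsto _).comp h1).pow 2).const_mul (1 / 2)
  have hdesc : ∀ k, F (k + 1) + lam / 2 * (frob (A (k + 1) - A k) + frob (B (k + 1) - B k)) ^ 2
      ≤ F k := by
    intro k
    have d1 := descA lam _ _ _ _ (sA k)
    have d2 := descB lam _ _ _ _ (sB k)
    have d3 : frob (A (k + 1) * B (k + 1) - X (k + 1)) ≤ frob (A (k + 1) * B (k + 1) - X k) := by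
      refine frob_mono _ _ fun i j => ?_
      by_cases h : (i, j) ∈ Ω
      · have e1 := hXin k (i, j) h
        have e2 := hXin (k + 1) (i, j) h
        simp only at e1 e2
        rw [Matrix.sub_apply, e2, Matrix.sub_apply, e1]
      · have e2 := hXout (k + 1) (i, j) h
        simp only at e2
        rw [Matrix.sub_apply, e2]; simp
    have d4 := pow_le_pow_left₀ (frob_nonneg _) d3 2
    have d5 := mul_nonneg hlam.le (sq_nonneg (frob (A (k + 1) - A k) - frob (B (k + 1) - B k)))
    simp only [hF]
    nlinarith
  have hanti : Antitone F := antitone_nat_of_succ_le fun k => by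
    have := hdesc k
    have : 0 ≤ lam / 2 * (frob (A (k + 1) - A k) + frob (B (k + 1) - B k)) ^ 2 := by positivity
    linarith
  have hFge : ∀ k, Fs ≤ F k := fun k => hanti.le_of_tendsto hFlim k
  have hG : ∀ k, pgnorm Ω (A k) (B k) (X k) ≤
      (lam + M * M + (M * M + M + M * M)) * (frob (A (k + 1) - A k) + frob (B (k + 1) - B k)) := by
    intro k
    have g1 := gradA lam M hlam _ _ _ _ (hM k).2.1 (sA k)
    have g2 := gradB lam M hlam (A k) (A (k + 1)) (B k) (B (k + 1)) (X k) (hM k).1 (hM (k + 1)).1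
      (hM k).2.1 (hM k).2.2 (sB k)
    have hz : (∑ p : Fin m × Fin n, if p ∈ Ω then 0 else ‖(X k - A k * B k) p.1 p.2‖ ^ 2) = 0 := by
      refine Finset.sum_eq_zero fun p _ => ?_
      split_ifs with h
      · rfl
      · rw [Matrix.sub_apply, hXout k p h]; simp
    have h1 := frob_nonneg ((A k * B k - X k) * (B k)ᴴ)
    have h2 := frob_nonneg ((A k)ᴴ * (A k * B k - X k))
    have h3 : pgnorm Ω (A k) (B k) (X k) ≤ frob ((A k * B k - X k) * (B k)ᴴ) +
        frob ((A k)ᴴ * (A k * B k - X k)) := by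
      unfold pgnorm
      rw [hz]
      refine Real.sqrt_le_iff.2 ⟨by positivity, ?_⟩
      nlinarith
    have h4 : 0 ≤ (M * M + M + M * M) * frob (B (k + 1) - B k) :=
      mul_nonneg (by positivity) (hb0 k)
    linarith
  obtain ⟨β, hβ, h⟩ := seq_rate (fun k => F k - Fs)
    (fun k => frob (A (k + 1) - A k) + frob (B (k + 1) - B k)) T θ (lam / 2)
    (μ * (lam + M * M + (M * M + M + M * M))) (1 + M) hθ (by positivity) (by positivity)
    (by positivity) (fun k => sub_nonneg.2 (hFge k)) (fun k => add_nonneg (ha0 k) (hb0 k))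
    (fun k => by have := hdesc k; linarith)
    (fun k => by
      have h1 := hKL k
      rw [abs_of_nonneg (sub_nonneg.2 (hFge k))] at h1
      refine h1.trans ?_
      rw [mul_assoc]
      exact mul_le_mul_of_nonneg_left (hG k) hμ.le)
    (fun k => by
      have h1 := tri (A k) (A (k + 1)) Asharp
      have h2 := tri (B k) (B (k + 1)) Bsharp
      have h3 := tri (X k) (X (k + 1)) Xsharp
      have h4 := dX k
      linarith) hT0
  exact ⟨β, hβ, fun k hk => (htT k).trans (h k hk)⟩
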